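/- Let f ∈ ℂ[x,y,z,w] be a reduced homogeneous polynomial of degree d defining a surface D: f = 0 in P³, tame with respect to the pair ρ1, ρ2 of degrees e1 ≤ e2, and set e3 = d − 1 − e1 − e2 with e3 ≥ e2. Then the following are equivalent: (i) D is a free surface with exponents e1, e2, e3; (ii) ar(f)_{e3} > binom(e3−e1+3,3) + binom(e3−e2+3,3); (iii) ar(f)_{e3} = binom(e3−e1+3,3) + binom(e3−e2+3,3) + 1; (iv) some homogeneous syzygy of degree e3 does not belong to S·ρ1 + S·ρ2 (i.e., the first degree where a generator of AR(f) beyond ρ1, ρ2 is needed equals e3). -/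

import Mathlib

open MvPolynomial Matrix

noncomputable section

/-- The polynomial ring `S = ℂ[x,y,z,w]`. -/
abbrev S4 : Type := MvPolynomial (Fin 4) ℂ

/-- The `S`-linear map sending `ρ = (α,β,γ,δ)` to `α fₓ + β f_y + γ f_z + δ f_w`. -/
def jacPair (f : S4) : (Fin 4 → S4) →ₗ[S4] S4 where
  toFun ρ := ∑ i, ρ i * pderiv i f
  map_add' a b := by simp [add_mul, Finset.sum_add_distrib]
  map_smul' c a := by simp [Finset.mul_sum, mul_assoc]

/-- `AR(f)`: the `S`-module of all Jacobian syzygies of `f`. -/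
def AR4 (f : S4) : Submodule S4 (Fin 4 → S4) := LinearMap.ker (jacPair f)

/-- A vector of polynomials is homogeneous of degree `q` if each component is. -/
def VecHomog (ρ : Fin 4 → S4) (q : ℕ) : Prop := ∀ i, (ρ i).IsHomogeneous q

/-- `AR(f)_k`, the degree-`k` homogeneous part of `AR(f)`, as a `ℂ`-subspace. -/
def ARgr (f : S4) (k : ℕ) : Submodule ℂ (Fin 4 → S4) :=
  (AR4 f).restrictScalars ℂ ⊓ Submodule.pi Set.univ (fun _ => homogeneousSubmodule (Fin 4) ℂ k)

/-- `ar(f)_k = dim_ℂ AR(f)_k`. -/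
def arDim (f : S4) (k : ℕ) : ℕ := Module.finrank ℂ (ARgr f k)

/-- `ar(f)_q` for an integer index, with the convention that it vanishes for `q < 0`. -/
def arZ (f : S4) (q : ℤ) : ℕ := if 0 ≤ q then arDim f q.toNat else 0

/-- The Jacobian ideal of `f`. -/
def JacIdeal (f : S4) : Ideal S4 := Ideal.span (Set.range fun i : Fin 4 => pderiv i f)

/-- `m(f)_k = dim_ℂ M(f)_k`, the dimension of the degree-`k` part of the Milnor algebra. -/
def milnor4 (f : S4) (k : ℕ) : ℕ :=
  Module.finrank ℂ ((homogeneousSubmodule (Fin 4) ℂ k).map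
    (Submodule.mkQ ((JacIdeal f).restrictScalars ℂ)))

/-- `binom(m,3)` with the convention that it is `0` for `m < 3`. -/
def binom3 (m : ℤ) : ℕ := m.toNat.choose 3

/-- All four `3×3` minors of the `3×4` matrix with rows `ρ1, ρ2, ρ` vanish. -/
def MinorsVanish3 (ρ1 ρ2 ρ : Fin 4 → S4) : Prop :=
  ∀ j : Fin 4,
    (Matrix.of fun i k => ![ρ1, ρ2, ρ] i (j.succAbove k) : Matrix (Fin 3) (Fin 3) S4).det = 0

/-- `D : f = 0` is tame with respect to `ρ1, ρ2`: every homogeneous syzygy `ρ` for which all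
`3×3` minors of the matrix with rows `ρ1, ρ2, ρ` vanish lies in `S·ρ1 + S·ρ2`. -/
def TamePair (f : S4) (ρ1 ρ2 : Fin 4 → S4) : Prop :=
  ∀ ρ ∈ AR4 f, ∀ q : ℕ, VecHomog ρ q → MinorsVanish3 ρ1 ρ2 ρ →
    ∃ a b : S4, ρ = a • ρ1 + b • ρ2

/-- `ρ1` is a nonzero homogeneous syzygy of minimal degree `e1`, and `ρ2` is a homogeneous
syzygy of minimal degree `e2 ≥ e1` among the homogeneous syzygies not in `S·ρ1`. -/
def MinimalPair (f : S4) (ρ1 ρ2 : Fin 4 → S4) (e1 e2 : ℕ) : Prop :=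
  ρ1 ∈ AR4 f ∧ ρ1 ≠ 0 ∧ VecHomog ρ1 e1 ∧
  (∀ ρ ∈ AR4 f, ∀ q : ℕ, ρ ≠ 0 → VecHomog ρ q → e1 ≤ q) ∧
  ρ2 ∈ AR4 f ∧ VecHomog ρ2 e2 ∧ e1 ≤ e2 ∧ (∀ a : S4, ρ2 ≠ a • ρ1) ∧
  (∀ ρ ∈ AR4 f, ∀ q : ℕ, VecHomog ρ q → (∀ a : S4, ρ ≠ a • ρ1) → e2 ≤ q)

/-- `D : f = 0` is a free surface with exponents `d1 ≤ d2 ≤ d3`: `AR(f)` is a free graded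
`S`-module with a homogeneous basis of degrees `d1, d2, d3`. -/
def IsFreeWith (f : S4) (d1 d2 d3 : ℕ) : Prop :=
  d1 ≤ d2 ∧ d2 ≤ d3 ∧
  ∃ ρ1 ρ2 ρ3 : Fin 4 → S4,
    ρ1 ∈ AR4 f ∧ ρ2 ∈ AR4 f ∧ ρ3 ∈ AR4 f ∧
    VecHomog ρ1 d1 ∧ VecHomog ρ2 d2 ∧ VecHomog ρ3 d3 ∧
    (∀ ρ ∈ AR4 f, ∃ a b c : S4, ρ = a • ρ1 + b • ρ2 + c • ρ3) ∧
    (∀ a b c : S4, a • ρ1 + b • ρ2 + c • ρ3 = 0 → a = 0 ∧ b = 0 ∧ c = 0)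

/-- `D : f = 0` is a nearly free surface with exponents `d1 ≤ d2 ≤ d3` (`d4 = d3`):
`AR(f)` is generated by four homogeneous syzygies of degrees `d1, d2, d3, d3`,
with `d3 = d - (d1 + d2)`, whose module of relations is generated by a single relation
`a₁ρ₁ + a₂ρ₂ + a₃ρ₃ + a₄ρ₄ = 0` with `a₁, a₂, a₃, a₄` homogeneous of degrees
`d3-d1+1, d3-d2+1, 1, 1`. -/
def IsNearlyFreeWith (f : S4) (d d1 d2 d3 : ℕ) : Prop :=
  d1 ≤ d2 ∧ d2 ≤ d3 ∧ d1 + d2 + d3 = d ∧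
  ∃ (ρ : Fin 4 → Fin 4 → S4) (a : Fin 4 → S4),
    (∀ i, ρ i ∈ AR4 f) ∧
    VecHomog (ρ 0) d1 ∧ VecHomog (ρ 1) d2 ∧ VecHomog (ρ 2) d3 ∧ VecHomog (ρ 3) d3 ∧
    (∀ σ ∈ AR4 f, ∃ b : Fin 4 → S4, σ = ∑ i, b i • ρ i) ∧
    (a 0).IsHomogeneous (d3 - d1 + 1) ∧ (a 1).IsHomogeneous (d3 - d2 + 1) ∧
    (a 2).IsHomogeneous 1 ∧ (a 3).IsHomogeneous 1 ∧
    a ≠ 0 ∧ (∑ i, a i • ρ i) = 0 ∧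
    (∀ b : Fin 4 → S4, (∑ i, b i • ρ i) = 0 → ∃ c : S4, b = c • a)

/-- `D : f = 0` is tame: it is tame with respect to some pair `ρ1, ρ2` chosen as in the paper. -/
def IsTame (f : S4) : Prop :=
  ∃ (ρ1 ρ2 : Fin 4 → S4) (e1 e2 : ℕ), MinimalPair f ρ1 ρ2 e1 e2 ∧ TamePair f ρ1 ρ2

/-- The `4×4` matrix with rows the Euler vector field `(x,y,z,w)` and `ρ1, ρ2, ρ`. -/
def EMat (ρ1 ρ2 ρ : Fin 4 → S4) : Matrix (Fin 4) (Fin 4) S4 :=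
  Matrix.of ![fun i => X i, ρ1, ρ2, ρ]

/-!
By tameness, a syzygy `ρ3` of degree `e3` outside the span of `ρ1, ρ2` is linearly independent of
them. Bordering `ρ1, ρ2, ρ3` by the Euler field gives a matrix that sends the gradient of `f` to
`(d * f, 0, 0, 0)`. So `f` divides its determinant times every partial derivative of `f`, and hence
the determinant itself, because `f` is squarefree. As the degrees add up to `d`, the determinant is
a nonzero constant multiple of `f`, and Cramer's rule writes every syzygy as a combination of
`ρ1, ρ2, ρ3`. Conversely, on a free surface the degree-`e3` syzygies are the combinations of
`ρ1, ρ2, ρ3`, whose dimension exceeds the largest possible one for the span of `ρ1, ρ2` by one.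
-/

section PartialDerivatives

variable {σ R K : Type*}

theorem totalDegree_pderiv_lt [CommSemiring R] {p : MvPolynomial σ R} (i : σ)
    (hp : 0 < p.totalDegree) : (pderiv i p).totalDegree < p.totalDegree := by
  rw [totalDegree, Finset.sup_lt_iff hp]
  intro m hm
  rw [mem_support_iff, coeff_pderiv] at hm
  have hle := le_totalDegree (mem_support_iff.2 (left_ne_zero_of_mul hm))
  rw [Finsupp.sum_add_index' (fun _ => rfl) (fun _ _ _ => rfl), Finsupp.sum_single_index rfl] at hle
  exact hle

theorem pderiv_eq_zero_of_dvd [CommRing R] [IsDomain R] {p : MvPolynomial σ R} {i : σ}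
    (h : p ∣ pderiv i p) : pderiv i p = 0 := by
  by_contra hne
  have hle := totalDegree_le_of_dvd_of_isDomain h hne
  rcases Nat.eq_zero_or_pos p.totalDegree with h0 | hpos
  · rw [totalDegree_eq_zero_iff_eq_C.1 h0, pderiv_C] at hne
    exact hne rfl
  · exact hle.not_gt (totalDegree_pderiv_lt i hpos)

theorem eq_C_of_forall_pderiv_eq_zero [CommSemiring R] [NoZeroDivisors R] [CharZero R]
    {p : MvPolynomial σ R} (h : ∀ i, pderiv i p = 0) : p = C (coeff 0 p) := by
  classical
  ext m
  rw [coeff_C]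
  split_ifs with hm
  · rw [hm]
  obtain ⟨i, hi⟩ := Finsupp.ne_iff.1 (Ne.symm hm)
  have hcoeff := coeff_pderiv (i := i) p (m - Finsupp.single i 1)
  rw [h i, coeff_zero, Finsupp.sub_add_single_one_cancel hi, eq_comm, mul_eq_zero] at hcoeff
  exact hcoeff.resolve_right (Nat.cast_add_one_ne_zero _)

theorem exists_not_dvd_pderiv_of_prime [Field K] [CharZero K] {p : MvPolynomial σ K}
    (hp : Prime p) : ∃ i, ¬ p ∣ pderiv i p := by
  by_contra! h
  have hconst := eq_C_of_forall_pderiv_eq_zero fun i => pderiv_eq_zero_of_dvd (h i)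
  have hcoeff : coeff 0 p ≠ 0 := fun h0 => hp.ne_zero (by rw [hconst, h0, C_0])
  exact hp.not_isUnit (hconst ▸ hcoeff.isUnit.map C)

theorem dvd_of_squarefree_of_forall_prime_dvd {M : Type*} [CommMonoidWithZero M]
    [UniqueFactorizationMonoid M] {a b : M} (ha : Squarefree a)
    (h : ∀ p, Prime p → p ∣ a → p ∣ b) : a ∣ b := by
  induction a using UniqueFactorizationMonoid.induction_on_prime with
  | h₁ => exact (ha 0 (dvd_zero _)).dvd
  | h₂ a hu => exact hu.dvd
  | h₃ a p _ hp ih =>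
    obtain ⟨hrel, -, ha'⟩ := squarefree_mul_iff.1 ha
    exact hrel.mul_dvd (h p hp (dvd_mul_right p a))
      (ih ha' fun q hq hqa => h q hq (hqa.mul_left p))

theorem dvd_of_forall_dvd_mul_pderiv [Field K] [CharZero K] {f g : MvPolynomial σ K}
    (hf : Squarefree f) (h : ∀ i, f ∣ g * pderiv i f) : f ∣ g := by
  refine dvd_of_squarefree_of_forall_prime_dvd hf ?_
  rintro p hp ⟨q, rfl⟩
  have hpq : ¬ p ∣ q := fun hdvd => hp.not_isUnit (hf p (mul_dvd_mul_left p hdvd))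
  obtain ⟨i, hi⟩ := exists_not_dvd_pderiv_of_prime hp
  have hpderiv : ¬ p ∣ pderiv i (p * q) := by
    rw [pderiv_mul, dvd_add_left (dvd_mul_right p _)]
    exact hp.not_dvd_mul hi hpq
  exact (hp.dvd_or_dvd ((dvd_mul_right p q).trans (h i))).resolve_right hpderiv

end PartialDerivatives

section Determinants

variable {m n σ R : Type*} [CommRing R]

theorem isHomogeneous_det_of_rows [Fintype n] [DecidableEq n]
    {M : Matrix n n (MvPolynomial σ R)} {e : n → ℕ} (hM : ∀ i j, (M i j).IsHomogeneous (e i)) :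
    M.det.IsHomogeneous (∑ i, e i) := by
  rw [det_apply]
  refine IsHomogeneous.sum _ _ _ fun τ _ => ?_
  have hprod : (∏ i, M (τ i) i).IsHomogeneous (∑ i, e i) := by
    rw [← Equiv.sum_comp τ e]
    exact IsHomogeneous.prod _ _ _ fun i _ => hM (τ i) i
  rw [Units.smul_def, zsmul_eq_mul, ← map_intCast (C : R →+* MvPolynomial σ R)]
  exact hprod.C_mul _

theorem det_submatrix_eq_zero_of_not_linearIndependent [Fintype m] [DecidableEq m] [IsDomain R]
    {v : m → n → R} (hv : ¬ LinearIndependent R v) (g : m → n) :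
    ((Matrix.of v).submatrix id g).det = 0 := by
  by_contra hdet
  exact hv ((linearIndependent_rows_of_det_ne_zero hdet).of_comp (LinearMap.funLeft R R g))

end Determinants

section JacobianSyzygies

variable {σ R : Type*} [Fintype σ] [CommSemiring R]

/-- The module `AR(f)` of Jacobian syzygies of `f`: the vectors `v` with `∑ i, v i * ∂f/∂xᵢ = 0`. -/
def jacobianSyzygies (f : MvPolynomial σ R) :
    Submodule (MvPolynomial σ R) (σ → MvPolynomial σ R) :=
  LinearMap.ker (Fintype.linearCombination (MvPolynomial σ R) fun i => pderiv i f)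

theorem mem_jacobianSyzygies {f : MvPolynomial σ R} {v : σ → MvPolynomial σ R} :
    v ∈ jacobianSyzygies f ↔ v ⬝ᵥ (fun i => pderiv i f) = 0 :=
  Iff.rfl

/-- The hypersurface `f = 0` is free with exponents `e`: the module `AR(f)` has a basis `ρ` whose
member `ρ i` is homogeneous of degree `e i`. -/
def IsFreeWithExponents {ι : Type*} (f : MvPolynomial σ R) (e : ι → ℕ) : Prop :=
  ∃ ρ : ι → σ → MvPolynomial σ R, (∀ i j, (ρ i j).IsHomogeneous (e i)) ∧
    LinearIndependent (MvPolynomial σ R) ρ ∧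
    Submodule.span (MvPolynomial σ R) (Set.range ρ) = jacobianSyzygies f

end JacobianSyzygies

section SaitoMatrix

variable {R : Type*} [CommRing R] {n d : ℕ} {f : MvPolynomial (Fin (n + 1)) R}
  {ρ : Fin n → Fin (n + 1) → MvPolynomial (Fin (n + 1)) R}

/-- The square matrix whose first row is the Euler vector field `(x₀, …, xₙ)` and whose remaining
rows are `ρ`. Saito's criterion detects freeness through its determinant. -/
def saitoMatrix (ρ : Fin n → Fin (n + 1) → MvPolynomial (Fin (n + 1)) R) :
    Matrix (Fin (n + 1)) (Fin (n + 1)) (MvPolynomial (Fin (n + 1)) R) :=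
  Matrix.of (Fin.cons X ρ)

theorem saitoMatrix_mulVec_pderiv (hf : f.IsHomogeneous d) (hρ : ∀ i, ρ i ∈ jacobianSyzygies f) :
    saitoMatrix ρ *ᵥ (fun i => pderiv i f) = Pi.single 0 (d • f) := by
  ext1 i
  cases i using Fin.cases with
  | zero => rw [Pi.single_eq_same]; exact hf.sum_X_mul_pderiv
  | succ i => rw [Pi.single_eq_of_ne i.succ_ne_zero]; exact mem_jacobianSyzygies.1 (hρ i)

theorem vecMul_saitoMatrix (ρ : Fin n → Fin (n + 1) → MvPolynomial (Fin (n + 1)) R)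
    (c : Fin (n + 1) → MvPolynomial (Fin (n + 1)) R) :
    c ᵥ* saitoMatrix ρ = c 0 • X + ∑ i, c (Fin.succ i) • ρ i := by
  rw [vecMul_eq_sum, Fin.sum_univ_succ]
  rfl

theorem updateRow_saitoMatrix (ρ : Fin n → Fin (n + 1) → MvPolynomial (Fin (n + 1)) R) (i : Fin n)
    (v : Fin (n + 1) → MvPolynomial (Fin (n + 1)) R) :
    (saitoMatrix ρ).updateRow i.succ v = saitoMatrix (Function.update ρ i v) :=
  (Fin.cons_update (α := fun _ => Fin (n + 1) → MvPolynomial (Fin (n + 1)) R) X ρ i v).symm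

theorem isHomogeneous_det_saitoMatrix {e : Fin n → ℕ}
    (he : ∀ i j, (ρ i j).IsHomogeneous (e i)) :
    (saitoMatrix ρ).det.IsHomogeneous (∑ i, e i + 1) := by
  have hrows : ∀ i j, (saitoMatrix ρ i j).IsHomogeneous ((Fin.cons 1 e : Fin (n + 1) → ℕ) i) :=
    Fin.cases (fun j => isHomogeneous_X R j) he
  simpa only [Fin.sum_cons, add_comm] using isHomogeneous_det_of_rows hrows

variable [IsDomain R] [CharZero R]

theorem apply_zero_eq_zero_of_vecMul_saitoMatrix_mem (hd : d ≠ 0) (hf : f.IsHomogeneous d)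
    (hf0 : f ≠ 0) (hρ : ∀ i, ρ i ∈ jacobianSyzygies f)
    {c : Fin (n + 1) → MvPolynomial (Fin (n + 1)) R}
    (hc : c ᵥ* saitoMatrix ρ ∈ jacobianSyzygies f) : c 0 = 0 := by
  rw [mem_jacobianSyzygies, ← dotProduct_mulVec, saitoMatrix_mulVec_pderiv hf hρ,
    dotProduct_single] at hc
  exact (mul_eq_zero.1 hc).resolve_right (smul_ne_zero hd hf0)

theorem det_saitoMatrix_ne_zero (hd : d ≠ 0) (hf : f.IsHomogeneous d) (hf0 : f ≠ 0)
    (hρ : ∀ i, ρ i ∈ jacobianSyzygies f)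
    (hli : LinearIndependent (MvPolynomial (Fin (n + 1)) R) ρ) :
    (saitoMatrix ρ).det ≠ 0 := by
  intro hdet
  obtain ⟨c, hc, hcM⟩ := exists_vecMul_eq_zero_iff.2 hdet
  have hc0 : c 0 = 0 :=
    apply_zero_eq_zero_of_vecMul_saitoMatrix_mem hd hf hf0 hρ (hcM ▸ zero_mem _)
  rw [vecMul_saitoMatrix, hc0, zero_smul, zero_add] at hcM
  have hcs := Fintype.linearIndependent_iff.1 hli _ hcM
  exact hc (funext (Fin.cases hc0 hcs))

end SaitoMatrix

section SaitoCriterion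

variable {K : Type*} [Field K] [CharZero K] {n d : ℕ} {f : MvPolynomial (Fin (n + 1)) K}
  {ρ : Fin n → Fin (n + 1) → MvPolynomial (Fin (n + 1)) K}

theorem dvd_det_saitoMatrix (hf : f.IsHomogeneous d) (hred : Squarefree f)
    (hρ : ∀ i, ρ i ∈ jacobianSyzygies f) : f ∣ (saitoMatrix ρ).det := by
  refine dvd_of_forall_dvd_mul_pderiv hred fun i => ?_
  have hadj : (saitoMatrix ρ).det • (fun i => pderiv i f) =
      (saitoMatrix ρ).adjugate *ᵥ Pi.single 0 (d • f) := by
    rw [← saitoMatrix_mulVec_pderiv hf hρ, mulVec_mulVec, adjugate_mul, smul_mulVec, one_mulVec]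
  have hi : (saitoMatrix ρ).det * pderiv i f = (saitoMatrix ρ).adjugate i 0 * (d • f) := by
    have hi := congrFun hadj i
    rwa [mulVec_single] at hi
  exact hi ▸ (dvd_smul_of_dvd d dvd_rfl).mul_left _

theorem exists_det_saitoMatrix_eq {e : Fin n → ℕ} (hf : f.IsHomogeneous d) (hred : Squarefree f)
    (hρ : ∀ i, ρ i ∈ jacobianSyzygies f) (he : ∀ i j, (ρ i j).IsHomogeneous (e i))
    (hde : ∑ i, e i + 1 = d) (hli : LinearIndependent (MvPolynomial (Fin (n + 1)) K) ρ) :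
    ∃ c : K, c ≠ 0 ∧ (saitoMatrix ρ).det = f * C c := by
  have hdet := det_saitoMatrix_ne_zero (by omega) hf hred.ne_zero hρ hli
  obtain ⟨q, hq⟩ := dvd_det_saitoMatrix hf hred hρ
  have hq0 : q ≠ 0 := right_ne_zero_of_mul (hq ▸ hdet)
  have hdeg := (isHomogeneous_det_saitoMatrix he).totalDegree hdet
  rw [hq, totalDegree_mul_of_isDomain hred.ne_zero hq0, hf.totalDegree hred.ne_zero] at hdeg
  have hqC : q = C (coeff 0 q) := totalDegree_eq_zero_iff_eq_C.1 (by omega)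
  refine ⟨coeff 0 q, fun h => hq0 ?_, hqC ▸ hq⟩
  rw [hqC, h, C_0]

/-- Saito's criterion. -/
theorem span_range_eq_jacobianSyzygies {e : Fin n → ℕ} (hf : f.IsHomogeneous d)
    (hred : Squarefree f) (hρ : ∀ i, ρ i ∈ jacobianSyzygies f)
    (he : ∀ i j, (ρ i j).IsHomogeneous (e i)) (hde : ∑ i, e i + 1 = d)
    (hli : LinearIndependent (MvPolynomial (Fin (n + 1)) K) ρ) :
    Submodule.span (MvPolynomial (Fin (n + 1)) K) (Set.range ρ) = jacobianSyzygies f := by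
  refine le_antisymm (Submodule.span_le.2 (Set.range_subset_iff.2 hρ)) fun v hv => ?_
  obtain ⟨c, hc, hdet⟩ := exists_det_saitoMatrix_eq hf hred hρ he hde hli
  set b := cramer (saitoMatrix ρ)ᵀ v with hbdef
  have hb : b ᵥ* saitoMatrix ρ = (f * C c) • v := by
    rw [hbdef, ← mulVec_transpose, mulVec_cramer, det_transpose, hdet]
  have hb0 : b 0 = 0 := apply_zero_eq_zero_of_vecMul_saitoMatrix_mem (by omega) hf hred.ne_zero hρ
    (hb ▸ Submodule.smul_mem _ _ hv)
  have hbs : ∀ i : Fin n, f ∣ b i.succ := by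
    intro i
    rw [hbdef, cramer_transpose_apply, updateRow_saitoMatrix]
    refine dvd_det_saitoMatrix hf hred fun j => ?_
    rcases eq_or_ne j i with rfl | hji
    · rwa [Function.update_self]
    · rw [Function.update_of_ne hji]
      exact hρ j
  choose a ha using hbs
  have hv_eq : (C c : MvPolynomial (Fin (n + 1)) K) • v = ∑ i, a i • ρ i := by
    refine smul_right_injective _ hred.ne_zero ?_
    simp only [vecMul_saitoMatrix, hb0, zero_smul, zero_add, ha, mul_smul, ← Finset.smul_sum] at hb
    exact hb.symm
  have hv_mem : (C c : MvPolynomial (Fin (n + 1)) K) • v ∈ Submodule.span _ (Set.range ρ) :=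
    hv_eq ▸ Submodule.sum_smul_mem _ _ fun i _ => Submodule.subset_span (Set.mem_range_self i)
  exact (Submodule.smul_mem_iff_of_isUnit _ (hc.isUnit.map C)).1 hv_mem

end SaitoCriterion

section HomogeneousParts

variable {σ R ι κ : Type*} [CommRing R]

/-- The space `N_k` of elements of `N` all of whose coordinates are homogeneous of degree `k`. -/
def homogeneousPart (N : Submodule (MvPolynomial σ R) (κ → MvPolynomial σ R)) (k : ℕ) :
    Submodule R (κ → MvPolynomial σ R) :=
  N.restrictScalars R ⊓ Submodule.pi Set.univ fun _ => homogeneousSubmodule σ R k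

theorem mem_homogeneousPart {N : Submodule (MvPolynomial σ R) (κ → MvPolynomial σ R)} {k : ℕ}
    {v : κ → MvPolynomial σ R} :
    v ∈ homogeneousPart N k ↔ v ∈ N ∧ ∀ j, (v j).IsHomogeneous k := by
  simp only [homogeneousPart, Submodule.mem_inf, Submodule.restrictScalars_mem, Submodule.mem_pi,
    Set.mem_univ, true_imp_iff, mem_homogeneousSubmodule]

theorem homogeneousComponent_mul_of_isHomogeneous {p q : MvPolynomial σ R} {i k : ℕ}
    (hq : q.IsHomogeneous i) (hik : i ≤ k) :
    homogeneousComponent k (p * q) = homogeneousComponent (k - i) p * q := by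
  let _ : GradedAlgebra (homogeneousSubmodule σ R) := gradedAlgebra
  have hdecompose (r : MvPolynomial σ R) (m : ℕ) :
      (DirectSum.decompose (homogeneousSubmodule σ R) r m : MvPolynomial σ R) =
        homogeneousComponent m r :=
    decomposition.decompose'_apply r m
  rw [← hdecompose, ← hdecompose]
  exact DirectSum.coe_decompose_mul_of_right_mem_of_le (homogeneousSubmodule σ R) hq hik

instance finite_homogeneousSubmodule [Finite σ] (k : ℕ) :
    Module.Finite R (homogeneousSubmodule σ R k) :=
  Module.Finite.iff_fg.2 (homogeneousSubmodule_fg σ R k)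

theorem finrank_homogeneousSubmodule [Nontrivial R] (n k : ℕ) :
    Module.finrank R (homogeneousSubmodule (Fin (n + 1)) R k) = (k + n).choose n := by
  have hsupp : homogeneousSubmodule (Fin (n + 1)) R k =
      restrictSupport R {m : Fin (n + 1) →₀ ℕ | m.degree = k} :=
    homogeneousSubmodule_eq_finsupp_supported _ _ _
  have hset : {m : Fin (n + 1) →₀ ℕ | m.degree = k} =
      ↑(Finset.finsuppAntidiag (Finset.univ : Finset (Fin (n + 1))) k) := by
    ext m
    simp [Finsupp.degree_eq_sum]
  rw [hsupp, Module.finrank_eq_nat_card_basis (basisRestrictSupport R _), hset,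
    Nat.card_coe_set_eq, Set.ncard_coe_finset, Finset.card_finsuppAntidiag_nat_eq_choose,
    Finset.card_univ, Fintype.card_fin, add_right_comm, Nat.add_sub_cancel, add_comm n k,
    Nat.choose_symm_add]

variable [Fintype ι]

/-- The map `c ↦ ∑ i, c i • ρ i` on coefficients `c i` homogeneous of degree `k - e i`. When `ρ i`
is homogeneous of degree `e i ≤ k`, its range is the degree-`k` part of the span of `ρ`. The
subtraction is truncated, so the condition `e i ≤ k` matters. -/
def gradedCombination (ρ : ι → κ → MvPolynomial σ R) (e : ι → ℕ) (k : ℕ) :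
    (∀ i, homogeneousSubmodule σ R (k - e i)) →ₗ[R] κ → MvPolynomial σ R :=
  (Fintype.linearCombination (MvPolynomial σ R) ρ).restrictScalars R ∘ₗ
    LinearMap.piMap fun i => (homogeneousSubmodule σ R (k - e i)).subtype

theorem gradedCombination_apply (ρ : ι → κ → MvPolynomial σ R) (e : ι → ℕ) (k : ℕ)
    (c : ∀ i, homogeneousSubmodule σ R (k - e i)) :
    gradedCombination ρ e k c = ∑ i, (c i : MvPolynomial σ R) • ρ i :=
  rfl

variable {ρ : ι → κ → MvPolynomial σ R} {e : ι → ℕ} {k : ℕ}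

theorem range_gradedCombination (hρ : ∀ i j, (ρ i j).IsHomogeneous (e i)) (hek : ∀ i, e i ≤ k) :
    LinearMap.range (gradedCombination ρ e k) =
      homogeneousPart (Submodule.span (MvPolynomial σ R) (Set.range ρ)) k := by
  ext v
  rw [mem_homogeneousPart, Submodule.mem_span_range_iff_exists_fun]
  constructor
  · rintro ⟨c, rfl⟩
    refine ⟨⟨_, rfl⟩, fun j => ?_⟩
    rw [gradedCombination_apply, Finset.sum_apply]
    refine IsHomogeneous.sum _ _ _ fun i _ => ?_
    have hmul := IsHomogeneous.mul (c i).2 (hρ i j)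
    rwa [Nat.sub_add_cancel (hek i)] at hmul
  · rintro ⟨⟨a, rfl⟩, hv⟩
    refine ⟨fun i => ⟨homogeneousComponent (k - e i) (a i), homogeneousComponent_mem _ _⟩, ?_⟩
    ext1 j
    rw [← homogeneousComponent_eq_self (hv j), gradedCombination_apply, Finset.sum_apply,
      Finset.sum_apply, map_sum]
    exact Finset.sum_congr rfl fun i _ =>
      (homogeneousComponent_mul_of_isHomogeneous (hρ i j) (hek i)).symm

theorem injective_gradedCombination (hli : LinearIndependent (MvPolynomial σ R) ρ) :
    Function.Injective (gradedCombination ρ e k) :=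
  hli.fintypeLinearCombination_injective.comp
    (Function.Injective.piMap fun _ => Subtype.val_injective)

end HomogeneousParts

section HilbertFunction

variable {K ι κ : Type*} [Field K] [Fintype ι] {n k : ℕ} {e : ι → ℕ}
  {ρ : ι → κ → MvPolynomial (Fin (n + 1)) K}

theorem finrank_pi_homogeneousSubmodule (e : ι → ℕ) :
    Module.finrank K (∀ i, homogeneousSubmodule (Fin (n + 1)) K (k - e i)) =
      ∑ i, (k - e i + n).choose n := by
  simp only [Module.finrank_pi_fintype, finrank_homogeneousSubmodule]

theorem finrank_le_of_le_homogeneousPart_span (hρ : ∀ i j, (ρ i j).IsHomogeneous (e i))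
    (hek : ∀ i, e i ≤ k) {W : Submodule K (κ → MvPolynomial (Fin (n + 1)) K)}
    (hW : W ≤ homogeneousPart (Submodule.span (MvPolynomial (Fin (n + 1)) K) (Set.range ρ)) k) :
    Module.finrank K W ≤ ∑ i, (k - e i + n).choose n := by
  rw [← range_gradedCombination hρ hek] at hW
  rw [← finrank_pi_homogeneousSubmodule (K := K)]
  exact (Submodule.finrank_mono hW).trans (LinearMap.finrank_range_le _)

theorem finrank_homogeneousPart_span (hρ : ∀ i j, (ρ i j).IsHomogeneous (e i))
    (hek : ∀ i, e i ≤ k) (hli : LinearIndependent (MvPolynomial (Fin (n + 1)) K) ρ) :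
    Module.finrank K
        (homogeneousPart (Submodule.span (MvPolynomial (Fin (n + 1)) K) (Set.range ρ)) k) =
      ∑ i, (k - e i + n).choose n := by
  rw [← range_gradedCombination hρ hek, ← finrank_pi_homogeneousSubmodule (K := K)]
  exact LinearMap.finrank_range_of_inj (injective_gradedCombination hli)

end HilbertFunction

/-- Tameness is stated through linear dependence of `ρ` and `v`, which over a domain amounts to the
vanishing of all maximal minors of the matrix with rows `ρ` and `v`. -/
theorem cor_3_4_a_general {K : Type*} [Field K] [CharZero K] {m d k : ℕ}
    {f : MvPolynomial (Fin (m + 2)) K} (hf : f.IsHomogeneous d) (hred : Squarefree f)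
    {e : Fin m → ℕ} {ρ : Fin m → Fin (m + 2) → MvPolynomial (Fin (m + 2)) K}
    (hρ : ∀ i, ρ i ∈ jacobianSyzygies f) (he : ∀ i j, (ρ i j).IsHomogeneous (e i))
    (htame : ∀ v ∈ homogeneousPart (jacobianSyzygies f) k,
      ¬ LinearIndependent (MvPolynomial (Fin (m + 2)) K)
        (Fin.snoc ρ v : Fin (m + 1) → Fin (m + 2) → MvPolynomial (Fin (m + 2)) K) →
      v ∈ Submodule.span (MvPolynomial (Fin (m + 2)) K) (Set.range ρ))
    (hde : ∑ i, e i + k + 1 = d) (hek : ∀ i, e i ≤ k) :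
    List.TFAE [
      IsFreeWithExponents f (Fin.snoc e k : Fin (m + 1) → ℕ),
      ∑ i, (k - e i + (m + 1)).choose (m + 1) <
        Module.finrank K (homogeneousPart (jacobianSyzygies f) k),
      Module.finrank K (homogeneousPart (jacobianSyzygies f) k) =
        ∑ i, (k - e i + (m + 1)).choose (m + 1) + 1,
      ∃ v ∈ homogeneousPart (jacobianSyzygies f) k,
        v ∉ Submodule.span (MvPolynomial (Fin (m + 2)) K) (Set.range ρ)] := by
  tfae_have 1 → 3 := by
    rintro ⟨t, ht, hli, hspan⟩
    have hk : ∀ i, (Fin.snoc e k : Fin (m + 1) → ℕ) i ≤ k :=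
      Fin.lastCases (by simp) (by simpa using hek)
    rw [← hspan, finrank_homogeneousPart_span ht hk hli]
    simp [Fin.sum_univ_castSucc]
  tfae_have 3 → 2 := fun h => h ▸ Nat.lt_succ_self _
  tfae_have 2 → 4 := by
    contrapose!
    intro hsub
    refine finrank_le_of_le_homogeneousPart_span he hek fun v hv => ?_
    exact mem_homogeneousPart.2 ⟨hsub v hv, (mem_homogeneousPart.1 hv).2⟩
  tfae_have 4 → 1 := by
    rintro ⟨v, hv, hvspan⟩
    have hli := not_not.1 (mt (htame v hv) hvspan)
    obtain ⟨hvf, hvk⟩ := mem_homogeneousPart.1 hv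
    have hsnoc : ∀ i j, ((Fin.snoc ρ v : Fin (m + 1) → Fin (m + 2) → MvPolynomial (Fin (m + 2)) K)
        i j).IsHomogeneous ((Fin.snoc e k : Fin (m + 1) → ℕ) i) :=
      Fin.lastCases (by simpa using hvk) (by simpa using he)
    refine ⟨_, hsnoc, hli, span_range_eq_jacobianSyzygies hf hred ?_ hsnoc ?_ hli⟩
    · exact Fin.lastCases (by simpa using hvf) (by simpa using hρ)
    · rw [Fin.sum_snoc, hde]
  tfae_finish

section Surfaces

theorem binom3_sub_add_three {a b : ℕ} (h : a ≤ b) :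
    binom3 ((b : ℤ) - a + 3) = (b - a + 3).choose 3 := by
  rw [binom3, show ((b : ℤ) - a + 3).toNat = b - a + 3 by omega]

variable {f : S4} {ρ1 ρ2 ρ : Fin 4 → S4} {d1 d2 d3 k : ℕ}

theorem mem_span_range_pair :
    ρ ∈ Submodule.span S4 (Set.range ![ρ1, ρ2]) ↔ ∃ a b : S4, ρ = a • ρ1 + b • ρ2 := by
  simp only [range_cons, range_empty, Set.union_empty, Set.singleton_union,
    Submodule.mem_span_pair, eq_comm]

theorem isFreeWith_iff :
    IsFreeWith f d1 d2 d3 ↔ d1 ≤ d2 ∧ d2 ≤ d3 ∧ IsFreeWithExponents f ![d1, d2, d3] := by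
  refine and_congr_right fun _ => and_congr_right fun _ => ?_
  constructor
  · rintro ⟨ρ1, ρ2, ρ3, hρ1, hρ2, hρ3, h1, h2, h3, hspan, hli⟩
    refine ⟨![ρ1, ρ2, ρ3], ?_, ?_, ?_⟩
    · exact Fin.forall_fin_succ.2 ⟨h1, Fin.forall_fin_two.2 ⟨h2, h3⟩⟩
    · refine Fintype.linearIndependent_iff.2 fun c hc => ?_
      rw [Fin.sum_univ_three] at hc
      simpa [Fin.forall_fin_succ] using hli _ _ _ hc
    · refine le_antisymm (Submodule.span_le.2 (Set.range_subset_iff.2 ?_)) fun ρ hρ => ?_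
      · exact Fin.forall_fin_succ.2 ⟨hρ1, Fin.forall_fin_two.2 ⟨hρ2, hρ3⟩⟩
      · obtain ⟨a, b, c, rfl⟩ := hspan ρ hρ
        exact (Submodule.mem_span_range_iff_exists_fun S4).2
          ⟨![a, b, c], Fin.sum_univ_three _⟩
  · rintro ⟨ρ, hdeg, hli, hspan⟩
    have hmem : ∀ i, ρ i ∈ AR4 f := fun i =>
      hspan.le (Submodule.subset_span (Set.mem_range_self i))
    refine ⟨ρ 0, ρ 1, ρ 2, hmem 0, hmem 1, hmem 2, hdeg 0, hdeg 1, hdeg 2, fun v hv => ?_,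
      fun a b c habc => ?_⟩
    · obtain ⟨c, rfl⟩ := (Submodule.mem_span_range_iff_exists_fun S4).1 (hspan.ge hv)
      exact ⟨c 0, c 1, c 2, Fin.sum_univ_three _⟩
    · have hzero := Fintype.linearIndependent_iff.1 hli ![a, b, c]
        ((Fin.sum_univ_three _).trans habc)
      exact ⟨hzero 0, hzero 1, hzero 2⟩

theorem TamePair.mem_span (htame : TamePair f ρ1 ρ2)
    (hρ : ρ ∈ homogeneousPart (jacobianSyzygies f) k)
    (hdep : ¬ LinearIndependent S4 ![ρ1, ρ2, ρ]) :
    ρ ∈ Submodule.span S4 (Set.range ![ρ1, ρ2]) := by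
  obtain ⟨hρf, hρk⟩ := mem_homogeneousPart.1 hρ
  exact mem_span_range_pair.2 (htame ρ hρf k hρk fun j =>
    det_submatrix_eq_zero_of_not_linearIndependent hdep j.succAbove)

theorem exists_homogeneousPart_notMem_span_iff :
    (∃ ρ ∈ homogeneousPart (jacobianSyzygies f) k, ρ ∉ Submodule.span S4 (Set.range ![ρ1, ρ2])) ↔
      ∃ ρ ∈ AR4 f, VecHomog ρ k ∧ ¬ ∃ a b : S4, ρ = a • ρ1 + b • ρ2 := by
  simp only [mem_homogeneousPart, mem_span_range_pair, and_assoc]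
  rfl

end Surfaces

/-- **Corollary 3.4 (first part).** Equivalent characterizations of freeness: `D` is free
with exponents `e1, e2, e3` iff `ar(f)_{e3}` exceeds the expected dimension, iff it exceeds
it by exactly one, iff some degree-`e3` syzygy lies outside `S·ρ1 + S·ρ2`. -/
theorem cor_3_4_a (f : S4) (d e1 e2 e3 : ℕ) (ρ1 ρ2 : Fin 4 → S4)
    (hd : 1 ≤ d) (hf : f.IsHomogeneous d) (hred : Squarefree f)
    (hmin : MinimalPair f ρ1 ρ2 e1 e2) (htame : TamePair f ρ1 ρ2)
    (he3 : e1 + e2 + e3 + 1 = d) (he23 : e2 ≤ e3) :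
    (IsFreeWith f e1 e2 e3 ↔
      binom3 ((e3 : ℤ) - e1 + 3) + binom3 ((e3 : ℤ) - e2 + 3) < arDim f e3) ∧
    (IsFreeWith f e1 e2 e3 ↔
      arDim f e3 = binom3 ((e3 : ℤ) - e1 + 3) + binom3 ((e3 : ℤ) - e2 + 3) + 1) ∧
    (IsFreeWith f e1 e2 e3 ↔
      ∃ ρ ∈ AR4 f, VecHomog ρ e3 ∧ ¬ ∃ a b : S4, ρ = a • ρ1 + b • ρ2) := by
  obtain ⟨hρ1, -, h1, -, hρ2, h2, he12, -⟩ := hmin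
  have he13 := he12.trans he23
  have htfae := cor_3_4_a_general (e := ![e1, e2]) (ρ := ![ρ1, ρ2]) hf hred
    (Fin.forall_fin_two.2 ⟨hρ1, hρ2⟩) (Fin.forall_fin_two.2 ⟨h1, h2⟩)
    (fun ρ hρ hdep => htame.mem_span hρ <| by
      simpa only [Fin.snoc_vecCons, Fin.snoc_vecEmpty] using hdep)
    (by simpa using he3) (Fin.forall_fin_two.2 ⟨he13, he23⟩)
  simp only [Fin.snoc_vecCons, Fin.snoc_vecEmpty, Fin.sum_univ_two, cons_val_zero,
    cons_val_one] at htfae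
  simp only [isFreeWith_iff, he12, he23, true_and, binom3_sub_add_three he13,
    binom3_sub_add_three he23]
  exact ⟨htfae.out 0 1, htfae.out 0 2,
    (htfae.out 0 3).trans exists_homogeneousPart_notMem_span_iff⟩
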